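/- Suppose the action space is trivial, |𝒰| = 1 (uncontrolled dynamics), so that there is a unique policy ensemble 𝛑 with generated mean field ensemble 𝛍 = Ψ(𝛑). Under Assumption (W), for every measurable f : 𝒳×[0,1] → ℝ with |f| ≤ M_f and every t ∈ 𝒯, E[|𝛍^N_t(f) − 𝛍_t(f)|] → 0 as N → ∞; moreover, if ‖W_N − W‖_{L∞→L1} = O(1/√N), then this convergence is at rate O(1/√N). -/

import Mathlib

open MeasureTheory Filter
open scoped BigOperators

namespace GMFG

variable {𝒳 𝒰 : Type*}

/-- The probability simplex 𝒫(𝒳) on a finite set, as probability mass functions. -/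
def simplex (𝒳 : Type*) [Fintype 𝒳] : Set (𝒳 → ℝ) :=
  {p | (∀ x, 0 ≤ p x) ∧ ∑ x, p x = 1}

/-- The set ℬ₁(𝒳) of (sub-probability) measures with total mass at most 1,
as mass functions. -/
def subProb (𝒳 : Type*) [Fintype 𝒳] : Set (𝒳 → ℝ) :=
  {p | (∀ x, 0 ≤ p x) ∧ ∑ x, p x ≤ 1}

/-- L¹ distance between measures on a finite set. -/
noncomputable def l1dist [Fintype 𝒳] (ν ν' : 𝒳 → ℝ) : ℝ := ∑ x, |ν x - ν' x|

/-- Markovian feedback policies π ∈ Π = 𝒫(𝒰)^{𝒯×𝒳}. -/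
def IsPolicy [Fintype 𝒰] (π : ℕ → 𝒳 → 𝒰 → ℝ) : Prop :=
  ∀ t x, (∀ u, 0 ≤ π t x u) ∧ ∑ u, π t x u = 1

/-- P : 𝒳×𝒰×ℬ₁(𝒳) → 𝒫(𝒳) is a transition kernel. -/
def IsKernel [Fintype 𝒳] [Fintype 𝒰] (P : 𝒳 → 𝒰 → (𝒳 → ℝ) → 𝒳 → ℝ) : Prop :=
  ∀ x u ν, ν ∈ subProb 𝒳 → P x u ν ∈ simplex 𝒳

/-- Lipschitz continuity of the transition kernel w.r.t. the L¹ norm. -/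
def KernelLipschitz [Fintype 𝒳] [Fintype 𝒰] (P : 𝒳 → 𝒰 → (𝒳 → ℝ) → 𝒳 → ℝ) (L : ℝ) : Prop :=
  ∀ x u ν ν', ν ∈ subProb 𝒳 → ν' ∈ subProb 𝒳 → l1dist (P x u ν) (P x u ν') ≤ L * l1dist ν ν'

/-- Lipschitz continuity of the reward w.r.t. the L¹ norm. -/
def RewardLipschitz [Fintype 𝒳] [Fintype 𝒰] (r : 𝒳 → 𝒰 → (𝒳 → ℝ) → ℝ) (L : ℝ) : Prop :=
  ∀ x u ν ν', ν ∈ subProb 𝒳 → ν' ∈ subProb 𝒳 → |r x u ν - r x u ν'| ≤ L * l1dist ν ν'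

/-- A graphon: symmetric, measurable, [0,1]-valued. -/
def IsGraphon (W : ℝ → ℝ → ℝ) : Prop :=
  Measurable (Function.uncurry W) ∧ (∀ a b, W a b = W b a) ∧ ∀ a b, W a b ∈ Set.Icc (0:ℝ) 1

/-- Lipschitz continuity of a graphon on [0,1]². -/
def GraphonLipschitz (W : ℝ → ℝ → ℝ) (L : ℝ) : Prop :=
  ∀ a b a' b' : ℝ, a ∈ Set.Icc (0:ℝ) 1 → b ∈ Set.Icc (0:ℝ) 1 → a' ∈ Set.Icc (0:ℝ) 1 →
    b' ∈ Set.Icc (0:ℝ) 1 → |W a b - W a' b'| ≤ L * (|a - a'| + |b - b'|)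

/-- The neighborhood mean field 𝔾^α = ∫₀¹ W(α,β) ν^β dβ of a state marginal ensemble ν. -/
noncomputable def nbhd [Fintype 𝒳] (W : ℝ → ℝ → ℝ) (ν : ℝ → 𝒳 → ℝ) (α : ℝ) : 𝒳 → ℝ :=
  fun x => ∫ β in Set.Ioc (0:ℝ) 1, W α β * ν β x

/-- 𝛍 = Ψ(𝛑): the (measurable) mean field ensemble generated by the policy ensemble 𝛑,
via μ^α_0 = μ₀ and
μ^α_{t+1}(x') = Σ_{x,u} μ^α_t(x) π^α_t(u|x) P(x'|x,u,𝔾^α_t). -/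
def IsMeanFieldOf [Fintype 𝒳] [Fintype 𝒰] (W : ℝ → ℝ → ℝ) (P : 𝒳 → 𝒰 → (𝒳 → ℝ) → 𝒳 → ℝ)
    (μ0 : 𝒳 → ℝ) (πe : ℝ → ℕ → 𝒳 → 𝒰 → ℝ) (μ : ℕ → ℝ → 𝒳 → ℝ) : Prop :=
  (∀ t x, Measurable fun α => μ t α x) ∧
  (∀ α ∈ Set.Icc (0:ℝ) 1, μ 0 α = μ0) ∧
  ∀ t : ℕ, ∀ α ∈ Set.Icc (0:ℝ) 1, ∀ x' : 𝒳,
    μ (t+1) α x' = ∑ x, μ t α x * ∑ u, πe α t x u * P x u (nbhd W (μ t) α) x'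

/-- The law of the state of a single mean field agent with neighborhood mean field
G and policy π: X_0 ∼ μ₀, U_t ∼ π_t(·|X_t), X_{t+1} ∼ P(·|X_t,U_t,G_t). -/
noncomputable def stateLaw [Fintype 𝒳] [Fintype 𝒰] (P : 𝒳 → 𝒰 → (𝒳 → ℝ) → 𝒳 → ℝ)
    (μ0 : 𝒳 → ℝ) (G : ℕ → 𝒳 → ℝ) (π : ℕ → 𝒳 → 𝒰 → ℝ) : ℕ → 𝒳 → ℝ
  | 0 => μ0
  | (t+1) => fun x' => ∑ x, stateLaw P μ0 G π t x * ∑ u, π t x u * P x u (G t) x'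

/-- Mean field objective J(π) = E[Σ_{t<T} r(X_t,U_t,G_t)] of a single agent whose
neighborhood mean field is G. -/
noncomputable def Jmf [Fintype 𝒳] [Fintype 𝒰] (T : ℕ) (r : 𝒳 → 𝒰 → (𝒳 → ℝ) → ℝ)
    (P : 𝒳 → 𝒰 → (𝒳 → ℝ) → 𝒳 → ℝ) (μ0 : 𝒳 → ℝ) (G : ℕ → 𝒳 → ℝ) (π : ℕ → 𝒳 → 𝒰 → ℝ) : ℝ :=
  ∑ t ∈ Finset.range T, ∑ x, stateLaw P μ0 G π t x * ∑ u, π t x u * r x u (G t)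

/-- A Graphon Mean Field Equilibrium: a measurable policy ensemble 𝛑 and mean field
ensemble 𝛍 with 𝛍 = Ψ(𝛑) and π^α optimal for J^𝛍_α for every α ∈ [0,1]. -/
def IsGMFE [Fintype 𝒳] [Fintype 𝒰] (T : ℕ) (W : ℝ → ℝ → ℝ) (P : 𝒳 → 𝒰 → (𝒳 → ℝ) → 𝒳 → ℝ)
    (r : 𝒳 → 𝒰 → (𝒳 → ℝ) → ℝ) (μ0 : 𝒳 → ℝ)
    (πe : ℝ → ℕ → 𝒳 → 𝒰 → ℝ) (μ : ℕ → ℝ → 𝒳 → ℝ) : Prop :=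
  (∀ t x u, Measurable fun α => πe α t x u) ∧
  (∀ α ∈ Set.Icc (0:ℝ) 1, IsPolicy (πe α)) ∧
  IsMeanFieldOf W P μ0 πe μ ∧
  ∀ α ∈ Set.Icc (0:ℝ) 1, ∀ π' : ℕ → 𝒳 → 𝒰 → ℝ, IsPolicy π' →
    Jmf T r P μ0 (fun t => nbhd W (μ t) α) π' ≤ Jmf T r P μ0 (fun t => nbhd W (μ t) α) (πe α)

/-- α ↦ π^α is Lipschitz continuous up to a finite set D of discontinuities. -/
def EnsembleLipschitzUpTo [Fintype 𝒳] [Fintype 𝒰] (πe : ℝ → ℕ → 𝒳 → 𝒰 → ℝ) : Prop :=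
  ∃ (L : ℝ) (D : Finset ℝ), ∀ (t : ℕ) (x : 𝒳) (u : 𝒰),
    ∀ α ∈ Set.Icc (0:ℝ) 1, ∀ β ∈ Set.Icc (0:ℝ) 1,
      (∀ d ∈ D, d ∉ Set.uIcc α β) → |πe α t x u - πe β t x u| ≤ L * |α - β|

/-- Edge indicators of a simple (undirected) graph. -/
def IsEdgeWeights {N : ℕ} (ξ : Fin N → Fin N → ℝ) : Prop :=
  (∀ i j, ξ i j = 0 ∨ ξ i j = 1) ∧ ∀ i j, ξ i j = ξ j i

/-- Empirical neighborhood mean field 𝔾ⁱ = (1/N) Σ_j ξ_{ij} δ_{X^j}. -/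
noncomputable def empNbhd [Fintype 𝒳] [DecidableEq 𝒳] {N : ℕ} (ξ : Fin N → Fin N → ℝ)
    (X : Fin N → 𝒳) (i : Fin N) : 𝒳 → ℝ :=
  fun x => (N : ℝ)⁻¹ * ∑ j, ξ i j * (if X j = x then 1 else 0)

/-- The joint law of the N agents' states at time t: X^i_0 ∼ μ₀ i.i.d.,
U^i_t ∼ π^i_t(·|X^i_t), X^i_{t+1} ∼ P(·|X^i_t,U^i_t,𝔾^i_t) conditionally independently. -/
noncomputable def jointLaw [Fintype 𝒳] [DecidableEq 𝒳] [Fintype 𝒰] {N : ℕ}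
    (P : 𝒳 → 𝒰 → (𝒳 → ℝ) → 𝒳 → ℝ) (μ0 : 𝒳 → ℝ) (ξ : Fin N → Fin N → ℝ)
    (πs : Fin N → ℕ → 𝒳 → 𝒰 → ℝ) : ℕ → (Fin N → 𝒳) → ℝ
  | 0 => fun X => ∏ i, μ0 (X i)
  | (t+1) => fun Y => ∑ X : Fin N → 𝒳, jointLaw P μ0 ξ πs t X *
      ∏ i, ∑ u, πs i t (X i) u * P (X i) u (empNbhd ξ X i) (Y i)

/-- The objective J^N_i = E[Σ_{t<T} r(X^i_t,U^i_t,𝔾^i_t)] of agent i in the N-agent game. -/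
noncomputable def JN [Fintype 𝒳] [DecidableEq 𝒳] [Fintype 𝒰] {N : ℕ} (T : ℕ)
    (r : 𝒳 → 𝒰 → (𝒳 → ℝ) → ℝ) (P : 𝒳 → 𝒰 → (𝒳 → ℝ) → 𝒳 → ℝ) (μ0 : 𝒳 → ℝ)
    (ξ : Fin N → Fin N → ℝ) (πs : Fin N → ℕ → 𝒳 → 𝒰 → ℝ) (i : Fin N) : ℝ :=
  ∑ t ∈ Finset.range T, ∑ X : Fin N → 𝒳, jointLaw P μ0 ξ πs t X *
    ∑ u, πs i t (X i) u * r (X i) u (empNbhd ξ X i)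

/-- Γ_N(𝛑) = (π^{1/N},…,π^{N/N}) (agent i : Fin N has graphon index (i+1)/N). -/
noncomputable def gammaN (πe : ℝ → ℕ → 𝒳 → 𝒰 → ℝ) (N : ℕ) : Fin N → ℕ → 𝒳 → 𝒰 → ℝ :=
  fun i => πe ((((i : ℕ) : ℝ) + 1) / N)

/-- The step graphon W_N of a finite graph: W_N(x,y) = ξ_{⌈Nx⌉,⌈Ny⌉}. -/
noncomputable def stepGraphon {N : ℕ} (ξ : Fin N → Fin N → ℝ) : ℝ → ℝ → ℝ := fun a b =>
  ∑ i : Fin N, ∑ j : Fin N,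
    (if ((i : ℕ) : ℝ) / N < a ∧ a ≤ (((i : ℕ) : ℝ) + 1) / N then 1 else 0) *
    (if ((j : ℕ) : ℝ) / N < b ∧ b ≤ (((j : ℕ) : ℝ) + 1) / N then 1 else 0) * ξ i j

/-- Assumption (W): ‖W_N − W‖_{L∞→L1} → 0, i.e.
sup_{‖g‖∞ ≤ 1} ∫₀¹ |∫₀¹ (W_N(α,β) − W(α,β)) g(β) dβ| dα → 0. -/
def OpConvergesTo (WN : (N : ℕ) → ℝ → ℝ → ℝ) (W : ℝ → ℝ → ℝ) : Prop :=
  ∀ ε > (0:ℝ), ∃ N₀ : ℕ, ∀ N ≥ N₀, ∀ g : ℝ → ℝ, Measurable g → (∀ β, |g β| ≤ 1) →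
    (∫ α in Set.Ioc (0:ℝ) 1, |∫ β in Set.Ioc (0:ℝ) 1, (WN N α β - W α β) * g β|) ≤ ε

/-- ‖W_N − W‖_{L∞→L1} = O(1/√N). -/
def OpRateSqrt (WN : (N : ℕ) → ℝ → ℝ → ℝ) (W : ℝ → ℝ → ℝ) : Prop :=
  ∃ C : ℝ, ∀ N : ℕ, 1 ≤ N → ∀ g : ℝ → ℝ, Measurable g → (∀ β, |g β| ≤ 1) →
    (∫ α in Set.Ioc (0:ℝ) 1, |∫ β in Set.Ioc (0:ℝ) 1, (WN N α β - W α β) * g β|) ≤ C / Real.sqrt N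

/-- 𝛍^N_t(f) = ∫₀¹ f(X^{⌈Nα⌉}, α) dα, the integral of f against the random empirical
step measure ensemble. -/
noncomputable def empInt [Fintype 𝒳] {N : ℕ} (f : 𝒳 → ℝ → ℝ) (X : Fin N → 𝒳) : ℝ :=
  ∑ i : Fin N, ∫ α in Set.Ioc (((i : ℕ) : ℝ) / N) ((((i : ℕ) : ℝ) + 1) / N), f (X i) α

/-- 𝛍_t(f) = ∫₀¹ Σ_x f(x,α) μ^α_t(x) dα. -/
noncomputable def mfInt [Fintype 𝒳] (f : 𝒳 → ℝ → ℝ) (ν : ℝ → 𝒳 → ℝ) : ℝ :=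
  ∫ α in Set.Ioc (0:ℝ) 1, ∑ x, f x α * ν α x

/-- The representative α_m = (m+1)/M of the m-th equivalence class Ĩ_m = (m/M,(m+1)/M]. -/
noncomputable def rep (M : ℕ) (m : Fin M) : ℝ := (((m : ℕ) : ℝ) + 1) / M

/-- Discretized neighborhood mean field 𝔾̂^{α_m} = (1/M) Σ_n W(α_m,α_n) ν^{α_n}. -/
noncomputable def approxNbhd [Fintype 𝒳] {M : ℕ} (W : ℝ → ℝ → ℝ) (ν : Fin M → 𝒳 → ℝ)
    (m : Fin M) : 𝒳 → ℝ :=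
  fun x => (M : ℝ)⁻¹ * ∑ n, W (rep M m) (rep M n) * ν n x

/-- The approximate mean field μ̂ = Ψ̂(𝛑) of the M equivalence classes method. -/
noncomputable def approxMF [Fintype 𝒳] [Fintype 𝒰] {M : ℕ} (W : ℝ → ℝ → ℝ)
    (P : 𝒳 → 𝒰 → (𝒳 → ℝ) → 𝒳 → ℝ) (μ0 : 𝒳 → ℝ) (πm : Fin M → ℕ → 𝒳 → 𝒰 → ℝ) :
    ℕ → Fin M → 𝒳 → ℝ
  | 0 => fun _ => μ0
  | (t+1) => fun m x' => ∑ x, approxMF W P μ0 πm t m x *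
      ∑ u, πm m t x u * P x u (approxNbhd W (approxMF W P μ0 πm t) m) x'

/-- A solution (𝛑, 𝛍) of the M equivalence classes method: 𝛑 is determined by policies
π^{α_m} (one per class), each optimal for the generated approximate mean field 𝛍 = Ψ̂(𝛑). -/
def IsEqClassSolution [Fintype 𝒳] [Fintype 𝒰] (T : ℕ) {M : ℕ} (W : ℝ → ℝ → ℝ)
    (P : 𝒳 → 𝒰 → (𝒳 → ℝ) → 𝒳 → ℝ) (r : 𝒳 → 𝒰 → (𝒳 → ℝ) → ℝ) (μ0 : 𝒳 → ℝ)
    (πm : Fin M → ℕ → 𝒳 → 𝒰 → ℝ) : Prop :=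
  (∀ m, IsPolicy (πm m)) ∧
  ∀ m, ∀ π' : ℕ → 𝒳 → 𝒰 → ℝ, IsPolicy π' →
    Jmf T r P μ0 (fun t => approxNbhd W (approxMF W P μ0 πm t) m) π'
      ≤ Jmf T r P μ0 (fun t => approxNbhd W (approxMF W P μ0 πm t) m) (πm m)

/-- The optimal action value function Q with k steps to go from time t,
Q(t,x,u) = r(x,u,G_t) + Σ_{x'} P(x'|x,u,G_t) max_{u'} Q(t+1,x',u'). -/
noncomputable def Qfun [Fintype 𝒳] [Fintype 𝒰] [Nonempty 𝒰] (r : 𝒳 → 𝒰 → (𝒳 → ℝ) → ℝ)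
    (P : 𝒳 → 𝒰 → (𝒳 → ℝ) → 𝒳 → ℝ) (G : ℕ → 𝒳 → ℝ) : ℕ → ℕ → 𝒳 → 𝒰 → ℝ
  | 0 => fun _ _ _ => 0
  | (k+1) => fun t x u => r x u (G t) + ∑ x', P x u (G t) x' *
      Finset.univ.sup' Finset.univ_nonempty (fun u' => Qfun r P G k (t+1) x' u')

/-- The Boltzmann (softmax) policy Φ̂_η(𝛍) of the M equivalence classes method with
horizon T, temperature η and block mean field ν. -/
noncomputable def boltzmann [Fintype 𝒳] [Fintype 𝒰] [Nonempty 𝒰] (T : ℕ) (η : ℝ)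
    (r : 𝒳 → 𝒰 → (𝒳 → ℝ) → ℝ) (P : 𝒳 → 𝒰 → (𝒳 → ℝ) → 𝒳 → ℝ) (W : ℝ → ℝ → ℝ) {M : ℕ}
    (ν : ℕ → Fin M → 𝒳 → ℝ) : Fin M → ℕ → 𝒳 → 𝒰 → ℝ :=
  fun m t x u =>
    Real.exp (Qfun r P (fun s => approxNbhd W (ν s) m) (T - t) t x u / η) /
      ∑ u' : 𝒰, Real.exp (Qfun r P (fun s => approxNbhd W (ν s) m) (T - t) t x u' / η)

/-- One step 𝛍 ↦ Ψ̂(Φ̂_η(𝛍)) of the Boltzmann fixed point iteration. -/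
noncomputable def boltzIter [Fintype 𝒳] [Fintype 𝒰] [Nonempty 𝒰] (T : ℕ) (η : ℝ)
    (r : 𝒳 → 𝒰 → (𝒳 → ℝ) → ℝ) (P : 𝒳 → 𝒰 → (𝒳 → ℝ) → 𝒳 → ℝ) (W : ℝ → ℝ → ℝ) (μ0 : 𝒳 → ℝ)
    {M : ℕ} (ν : ℕ → Fin M → 𝒳 → ℝ) : ℕ → Fin M → 𝒳 → ℝ :=
  fun t => approxMF W P μ0 (boltzmann T η r P W ν) t


/-!
The empirical ensemble `μᴺ` satisfies the mean field recursion driven by the step graphon `W_N`, up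
to sampling noise: on the `i`-th cell the neighborhood mean field of `μᴺ` under `W_N` is the
empirical neighborhood mean field `𝔾ⁱ`. Given the states at time `t`, the states at time `t + 1`
are independent, so `μᴺ_{t+1}(f)` is within `M / √N` in mean of its conditional expectation, which
is the integral against `μᴺ_t` of `f` pulled back along the transition kernel. Replacing `𝔾ⁱ` in
that kernel by the mean field `𝔾^α` costs, by Lipschitz continuity, the `L¹` distance of the two
fields. This distance splits into `W_N - W` applied to the bounded function `β ↦ μᴺ^β_t(x)`, and the
error of `μᴺ_t` against the test function `W(α, ·) 1_{x}`. The latter and the error for the pulled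
back `f` are controlled at time `t`, and induction gives the bound
`M (2 (1 + L |𝒳|))^t (1 / √N + ‖W_N - W‖)`.
-/

section FiniteProbability

variable [Fintype 𝒳]

theorem nonempty_of_mem_simplex {p : 𝒳 → ℝ} (hp : p ∈ simplex 𝒳) : Nonempty 𝒳 := by
  by_contra h
  rw [not_nonempty_iff] at h
  simpa using hp.2

theorem simplex_subset_subProb : simplex 𝒳 ⊆ subProb 𝒳 := fun _ hp => ⟨hp.1, hp.2.le⟩

theorem abs_apply_le_one_of_mem_subProb {p : 𝒳 → ℝ} (hp : p ∈ subProb 𝒳) (x : 𝒳) : |p x| ≤ 1 := by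
  rw [abs_of_nonneg (hp.1 x)]
  exact (Finset.single_le_sum (fun y _ => hp.1 y) (Finset.mem_univ x)).trans hp.2

theorem abs_sum_mul_le {p g : 𝒳 → ℝ} (hp : p ∈ simplex 𝒳) {c : ℝ} (hg : ∀ x, |g x| ≤ c) :
    |∑ x, p x * g x| ≤ c := by
  calc |∑ x, p x * g x| ≤ ∑ x, |p x * g x| := Finset.abs_sum_le_sum_abs _ _
    _ ≤ ∑ x, p x * c := Finset.sum_le_sum fun x _ => by
        rw [abs_mul, abs_of_nonneg (hp.1 x)]
        exact mul_le_mul_of_nonneg_left (hg x) (hp.1 x)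
    _ = c := by rw [← Finset.sum_mul, hp.2, one_mul]

theorem abs_sum_mul_sub_sum_mul_le {p q g : 𝒳 → ℝ} {c : ℝ} (hg : ∀ x, |g x| ≤ c) :
    |∑ x, p x * g x - ∑ x, q x * g x| ≤ c * l1dist p q := by
  rw [← Finset.sum_sub_distrib, l1dist, Finset.mul_sum]
  refine (Finset.abs_sum_le_sum_abs _ _).trans (Finset.sum_le_sum fun x _ => ?_)
  rw [← sub_mul, abs_mul, mul_comm]
  exact mul_le_mul_of_nonneg_right (hg x) (abs_nonneg _)

theorem sum_mul_sum_mul_mem_simplex {κ : Type*} [Fintype κ] {p : κ → ℝ} (hp : p ∈ simplex κ)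
    {q : κ → 𝒳 → ℝ} (hq : ∀ k, q k ∈ simplex 𝒳) : (fun x => ∑ k, p k * q k x) ∈ simplex 𝒳 := by
  refine ⟨fun x => Finset.sum_nonneg fun k _ => mul_nonneg (hp.1 k) ((hq k).1 x), ?_⟩
  rw [Finset.sum_comm]
  simp only [← Finset.mul_sum, (hq _).2, mul_one, hp.2]

theorem sum_mul_sub_mean_sq_le {p g : 𝒳 → ℝ} (hp : p ∈ simplex 𝒳) {c : ℝ} (hg : ∀ x, |g x| ≤ c) :
    ∑ x, p x * (g x - ∑ y, p y * g y) ^ 2 ≤ c ^ 2 := by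
  set m := ∑ y, p y * g y with hm
  have hvar : ∑ x, p x * (g x - m) ^ 2 = ∑ x, p x * g x ^ 2 - m ^ 2 := by
    have hexpand : ∀ x, p x * (g x - m) ^ 2 = p x * g x ^ 2 - 2 * m * (p x * g x) + m ^ 2 * p x :=
      fun x => by ring
    simp only [hexpand, Finset.sum_add_distrib, Finset.sum_sub_distrib, ← Finset.mul_sum, hp.2,
      ← hm]
    ring
  have hsq : ∑ x, p x * g x ^ 2 ≤ c ^ 2 :=
    (le_abs_self _).trans <| abs_sum_mul_le hp fun x => by
      rw [abs_pow]
      exact pow_le_pow_left₀ (abs_nonneg _) (hg x) 2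
  linarith [sq_nonneg m]

variable {ι : Type*} [Fintype ι] [DecidableEq ι]

theorem sum_prod_mul_prod {q : ι → 𝒳 → ℝ} (hq : ∀ i, ∑ x, q i x = 1) (a : ι → 𝒳 → ℝ)
    (s : Finset ι) :
    ∑ Y : ι → 𝒳, (∏ i, q i (Y i)) * ∏ i ∈ s, a i (Y i) = ∏ i ∈ s, ∑ x, q i x * a i x := by
  calc ∑ Y : ι → 𝒳, (∏ i, q i (Y i)) * ∏ i ∈ s, a i (Y i)
      = ∑ Y : ι → 𝒳, ∏ i, q i (Y i) * if i ∈ s then a i (Y i) else 1 := by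
        simp only [Finset.prod_mul_distrib, Fintype.prod_ite_mem]
    _ = ∏ i, ∑ x, q i x * if i ∈ s then a i x else 1 := by
        rw [Finset.prod_univ_sum, Fintype.piFinset_univ]
    _ = ∏ i, if i ∈ s then ∑ x, q i x * a i x else 1 :=
        Finset.prod_congr rfl fun i _ => by split_ifs <;> simp [hq]
    _ = ∏ i ∈ s, ∑ x, q i x * a i x := Fintype.prod_ite_mem _ _

theorem prod_mem_simplex {q : ι → 𝒳 → ℝ} (hq : ∀ i, q i ∈ simplex 𝒳) :
    (fun Y : ι → 𝒳 => ∏ i, q i (Y i)) ∈ simplex (ι → 𝒳) :=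
  ⟨fun Y => Finset.prod_nonneg fun i _ => (hq i).1 (Y i), by
    simpa using sum_prod_mul_prod (fun i => (hq i).2) q ∅⟩

theorem sum_prod_mul_sq_sum_of_centered {q h : ι → 𝒳 → ℝ} (hq : ∀ i, ∑ x, q i x = 1)
    (hh : ∀ i, ∑ x, q i x * h i x = 0) :
    ∑ Y : ι → 𝒳, (∏ i, q i (Y i)) * (∑ i, h i (Y i)) ^ 2 = ∑ i, ∑ x, q i x * h i x ^ 2 := by
  have hvar (i : ι) :
      ∑ Y : ι → 𝒳, (∏ k, q k (Y k)) * (h i (Y i) * h i (Y i)) = ∑ x, q i x * h i x ^ 2 := by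
    simpa only [Finset.prod_singleton, ← sq] using sum_prod_mul_prod hq (fun k x => h k x ^ 2) {i}
  have hcov (i j : ι) (hij : j ≠ i) :
      ∑ Y : ι → 𝒳, (∏ k, q k (Y k)) * (h i (Y i) * h j (Y j)) = 0 := by
    simpa [Finset.prod_pair hij.symm, hh] using sum_prod_mul_prod hq h {i, j}
  calc ∑ Y : ι → 𝒳, (∏ i, q i (Y i)) * (∑ i, h i (Y i)) ^ 2
      = ∑ i, ∑ j, ∑ Y : ι → 𝒳, (∏ k, q k (Y k)) * (h i (Y i) * h j (Y j)) := by
        simp_rw [sq, Finset.sum_mul_sum, Finset.mul_sum]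
        rw [Finset.sum_comm]
        exact Finset.sum_congr rfl fun i _ => Finset.sum_comm
    _ = ∑ i, ∑ x, q i x * h i x ^ 2 := Finset.sum_congr rfl fun i _ => by
        rw [Fintype.sum_eq_single i fun j => hcov i j, hvar]

theorem sum_prod_mul_abs_sum_sub_mean_le {q : ι → 𝒳 → ℝ} (hq : ∀ i, q i ∈ simplex 𝒳)
    {g : ι → 𝒳 → ℝ} {c : ℝ} (hc : 0 ≤ c) (hg : ∀ i x, |g i x| ≤ c) :
    ∑ Y : ι → 𝒳, (∏ i, q i (Y i)) * |∑ i, g i (Y i) - ∑ i, ∑ x, q i x * g i x| ≤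
      c * √(Fintype.card ι) := by
  set h : ι → 𝒳 → ℝ := fun i x => g i x - ∑ y, q i y * g i y with hdef
  have hcentered (i : ι) : ∑ x, q i x * h i x = 0 := by
    simp only [hdef, mul_sub, Finset.sum_sub_distrib, ← Finset.sum_mul, (hq i).2, one_mul, sub_self]
  have hprod := prod_mem_simplex hq
  simp only [← Finset.sum_sub_distrib]
  refine le_of_sq_le_sq ?_ (by positivity)
  calc (∑ Y : ι → 𝒳, (∏ i, q i (Y i)) * |∑ i, h i (Y i)|) ^ 2
      ≤ ∑ Y : ι → 𝒳, (∏ i, q i (Y i)) * |∑ i, h i (Y i)| ^ 2 :=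
        Real.pow_arith_mean_le_arith_mean_pow _ _ _ (fun Y _ => hprod.1 Y) hprod.2
          (fun _ _ => abs_nonneg _) 2
    _ = ∑ i, ∑ x, q i x * h i x ^ 2 := by
        simp only [sq_abs]
        exact sum_prod_mul_sq_sum_of_centered (fun i => (hq i).2) hcentered
    _ ≤ ∑ _i : ι, c ^ 2 := Finset.sum_le_sum fun i _ => sum_mul_sub_mean_sq_le (hq i) (hg i)
    _ = (c * √(Fintype.card ι)) ^ 2 := by
        rw [mul_pow, Real.sq_sqrt (Nat.cast_nonneg _), Finset.sum_const, Finset.card_univ,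
          nsmul_eq_mul, mul_comm]

end FiniteProbability

section Partition

/-- The `i`-th cell `(i / N, (i + 1) / N]` of the uniform partition of `(0, 1]`, where `i` counts
from `0`. -/
def cell (N : ℕ) (i : Fin N) : Set ℝ := Set.Ioc ((i : ℝ) / N) (((i : ℝ) + 1) / N)

variable {N : ℕ}

theorem measurableSet_cell (i : Fin N) : MeasurableSet (cell N i) := measurableSet_Ioc

theorem monotone_natCast_div (N : ℕ) : Monotone fun k : ℕ => (k : ℝ) / N := fun _ _ h => by
  dsimp only
  gcongr

theorem pairwise_disjoint_cell (N : ℕ) : Pairwise (Function.onFun Disjoint (cell N)) := by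
  intro i j hij
  simpa [Function.onFun, cell] using
    (monotone_natCast_div N).pairwise_disjoint_on_Ioc_succ (Fin.val_injective.ne hij)

theorem iUnion_cell (hN : N ≠ 0) : ⋃ i, cell N i = Set.Ioc (0 : ℝ) 1 := by
  have h := (monotone_natCast_div N).biUnion_Ico_Ioc_map_succ 0 N
  rw [Nat.cast_zero, zero_div, div_self (Nat.cast_ne_zero.2 hN)] at h
  rw [← h]
  ext α
  simp [cell, Fin.exists_iff]

theorem cell_subset (i : Fin N) : cell N i ⊆ Set.Ioc (0 : ℝ) 1 :=
  iUnion_cell i.pos.ne' ▸ Set.subset_iUnion (cell N) i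

theorem volume_real_cell (i : Fin N) : volume.real (cell N i) = (N : ℝ)⁻¹ := by
  rw [cell, Real.volume_real_Ioc_of_le (by gcongr; simp)]
  ring

theorem sum_integral_cell (hN : N ≠ 0) {h : ℝ → ℝ} (hh : IntegrableOn h (Set.Ioc (0 : ℝ) 1)) :
    ∑ i, ∫ α in cell N i, h α = ∫ α in Set.Ioc (0 : ℝ) 1, h α := by
  rw [← iUnion_cell hN, integral_iUnion_fintype measurableSet_cell (pairwise_disjoint_cell N)
    fun i => hh.mono_set (cell_subset i)]

theorem abs_integral_cell_le (i : Fin N) {h : ℝ → ℝ} {c : ℝ} (hb : ∀ α, |h α| ≤ c) :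
    |∫ α in cell N i, h α| ≤ c / N := by
  have := norm_setIntegral_le_of_norm_le_const (μ := volume) (s := cell N i) (f := h) (C := c)
    (by simp [cell]) (fun x _ => hb x)
  rwa [volume_real_cell, ← div_eq_mul_inv] at this

theorem integrableOn_Ioc_of_abs_le {h : ℝ → ℝ} (hm : Measurable h) {c : ℝ}
    (hb : ∀ α ∈ Set.Ioc (0 : ℝ) 1, |h α| ≤ c) : IntegrableOn h (Set.Ioc (0 : ℝ) 1) :=
  Measure.integrableOn_of_bounded measure_Ioc_lt_top.ne hm.aestronglyMeasurable
    ((ae_restrict_iff' measurableSet_Ioc).2 (ae_of_all _ hb))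

/-- The step function on the uniform partition of `(0, 1]` with value `c i` on the `i`-th cell,
extended by `0`. -/
noncomputable def stepFun (c : Fin N → ℝ) (α : ℝ) : ℝ :=
  ∑ i, (cell N i).indicator (fun _ => c i) α

theorem measurable_stepFun (c : Fin N → ℝ) : Measurable (stepFun c) :=
  Finset.measurable_fun_sum _ fun i _ => measurable_const.indicator (measurableSet_cell i)

theorem stepFun_of_mem_cell (c : Fin N → ℝ) {i : Fin N} {α : ℝ} (hα : α ∈ cell N i) :
    stepFun c α = c i := by
  rw [stepFun, Fintype.sum_eq_single i, Set.indicator_of_mem hα]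
  exact fun j hj => Set.indicator_of_notMem
    (fun hα' => Set.disjoint_left.1 (pairwise_disjoint_cell N hj) hα' hα) _

theorem stepFun_mem {s : Set ℝ} (h0 : 0 ∈ s) {c : Fin N → ℝ} (hc : ∀ i, c i ∈ s) (α : ℝ) :
    stepFun c α ∈ s := by
  by_cases h : ∃ i, α ∈ cell N i
  · obtain ⟨i, hi⟩ := h
    exact stepFun_of_mem_cell c hi ▸ hc i
  · push Not at h
    simpa [stepFun, Set.indicator_of_notMem (h _)] using h0

theorem integral_stepFun (c : Fin N → ℝ) :
    ∫ α in Set.Ioc (0 : ℝ) 1, stepFun c α = (N : ℝ)⁻¹ * ∑ i, c i := by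
  simp only [stepFun]
  rw [integral_finsetSum _ fun i _ =>
    (integrable_const (c i)).indicator (measurableSet_cell i), Finset.mul_sum]
  refine Finset.sum_congr rfl fun i _ => ?_
  rw [setIntegral_indicator (measurableSet_cell i), Set.inter_eq_right.2 (cell_subset i),
    setIntegral_const, volume_real_cell, smul_eq_mul]

end Partition

section Graphon

/-- A digraphon: a measurable, `[0,1]`-valued kernel that need not be symmetric. -/
structure IsDigraphon (W : ℝ → ℝ → ℝ) : Prop where
  measurable : Measurable (Function.uncurry W)
  mem_Icc : ∀ α β, W α β ∈ Set.Icc (0 : ℝ) 1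

theorem IsGraphon.isDigraphon {W : ℝ → ℝ → ℝ} (hW : IsGraphon W) : IsDigraphon W :=
  ⟨hW.1, hW.2.2⟩

theorem IsDigraphon.measurable_apply {W : ℝ → ℝ → ℝ} (hW : IsDigraphon W) (α : ℝ) :
    Measurable (W α) :=
  hW.measurable.comp measurable_prodMk_left

theorem IsDigraphon.abs_le_one {W : ℝ → ℝ → ℝ} (hW : IsDigraphon W) (α β : ℝ) : |W α β| ≤ 1 :=
  abs_le.2 ⟨by linarith [(hW.mem_Icc α β).1], (hW.mem_Icc α β).2⟩

theorem IsEdgeWeights.mem_Icc {N : ℕ} {ξ : Fin N → Fin N → ℝ} (hξ : IsEdgeWeights ξ)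
    (i j : Fin N) : ξ i j ∈ Set.Icc (0 : ℝ) 1 := by
  rcases hξ.1 i j with h | h <;> simp [h]

theorem stepGraphon_eq_stepFun {N : ℕ} (ξ : Fin N → Fin N → ℝ) (α β : ℝ) :
    stepGraphon ξ α β = stepFun (fun i => stepFun (ξ i) β) α := by
  classical
  simp only [stepGraphon, stepFun, cell, Set.indicator_apply, Set.mem_Ioc]
  refine Finset.sum_congr rfl fun i _ => ?_
  split_ifs <;> simp

theorem isDigraphon_stepGraphon {N : ℕ} {ξ : Fin N → Fin N → ℝ}
    (hξ : ∀ i j, ξ i j ∈ Set.Icc (0 : ℝ) 1) : IsDigraphon (stepGraphon ξ) where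
  measurable := by
    have hcell (i : Fin N) : MeasurableSet {a : ℝ | (i : ℝ) / N < a ∧ a ≤ ((i : ℝ) + 1) / N} :=
      measurableSet_cell i
    unfold Function.uncurry stepGraphon
    refine Finset.measurable_sum _ fun i _ => Finset.measurable_sum _ fun j _ => ?_
    exact ((Measurable.ite (measurable_fst (hcell i)) measurable_const measurable_const).mul
      (Measurable.ite (measurable_snd (hcell j)) measurable_const measurable_const)).mul_const _
  mem_Icc α β := by
    have h0 : (0 : ℝ) ∈ Set.Icc (0 : ℝ) 1 := by simp
    rw [stepGraphon_eq_stepFun]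
    exact stepFun_mem h0 (fun i => stepFun_mem h0 (hξ i) β) α

/-- `‖V - W‖_{L∞→L1} ≤ w`, tested on measurable functions bounded by `1` everywhere. -/
def OpDistLE (V W : ℝ → ℝ → ℝ) (w : ℝ) : Prop :=
  ∀ g : ℝ → ℝ, Measurable g → (∀ β, |g β| ≤ 1) →
    (∫ α in Set.Ioc (0 : ℝ) 1, |∫ β in Set.Ioc (0 : ℝ) 1, (V α β - W α β) * g β|) ≤ w

theorem OpDistLE.nonneg {V W : ℝ → ℝ → ℝ} {w : ℝ} (h : OpDistLE V W w) : 0 ≤ w := by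
  simpa using h (fun _ => 0) measurable_const (by simp)

end Graphon

section Ensemble

variable [Fintype 𝒳]

/-- A measurable ensemble `(ν^α)` of probability distributions on `𝒳`, indexed by `α ∈ (0, 1]`. -/
structure IsEnsemble (ν : ℝ → 𝒳 → ℝ) : Prop where
  measurable : ∀ x, Measurable fun α => ν α x
  mem_simplex : ∀ α ∈ Set.Ioc (0 : ℝ) 1, ν α ∈ simplex 𝒳

variable {W : ℝ → ℝ → ℝ} {ν : ℝ → 𝒳 → ℝ}

theorem IsEnsemble.abs_le_one (hν : IsEnsemble ν) (x : 𝒳) {α : ℝ} (hα : α ∈ Set.Ioc (0 : ℝ) 1) :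
    |ν α x| ≤ 1 :=
  abs_apply_le_one_of_mem_subProb (simplex_subset_subProb (hν.mem_simplex α hα)) x

theorem IsEnsemble.integrableOn (hν : IsEnsemble ν) (x : 𝒳) :
    IntegrableOn (fun α => ν α x) (Set.Ioc (0 : ℝ) 1) :=
  integrableOn_Ioc_of_abs_le (hν.measurable x) fun _ => hν.abs_le_one x

theorem IsEnsemble.integrableOn_mul (hν : IsEnsemble ν) (x : 𝒳) {g : ℝ → ℝ} (hg : Measurable g)
    {c : ℝ} (hc : ∀ α, |g α| ≤ c) :
    IntegrableOn (fun α => g α * ν α x) (Set.Ioc (0 : ℝ) 1) :=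
  (hν.integrableOn x).bdd_mul hg.aestronglyMeasurable (ae_of_all _ hc)

theorem IsEnsemble.integrableOn_sum_mul (hν : IsEnsemble ν) {f : 𝒳 → ℝ → ℝ}
    (hf : ∀ x, Measurable (f x)) {M : ℝ} (hM : ∀ x α, |f x α| ≤ M) :
    IntegrableOn (fun α => ∑ x, f x α * ν α x) (Set.Ioc (0 : ℝ) 1) :=
  integrable_finsetSum _ fun x _ => hν.integrableOn_mul x (hf x) (hM x)

theorem nbhd_mem_subProb (hW : IsDigraphon W) (hν : IsEnsemble ν) (α : ℝ) :
    nbhd W ν α ∈ subProb 𝒳 := by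
  refine ⟨fun x => setIntegral_nonneg measurableSet_Ioc fun β hβ =>
    mul_nonneg (hW.mem_Icc α β).1 ((hν.mem_simplex β hβ).1 x), ?_⟩
  calc ∑ x, nbhd W ν α x
      ≤ ∑ x, ∫ β in Set.Ioc (0 : ℝ) 1, ν β x := Finset.sum_le_sum fun x _ =>
        setIntegral_mono_on
          (hν.integrableOn_mul x (hW.measurable_apply α) (hW.abs_le_one α)) (hν.integrableOn x)
          measurableSet_Ioc fun β hβ =>
            mul_le_of_le_one_left ((hν.mem_simplex β hβ).1 x) (hW.mem_Icc α β).2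
    _ = ∫ β in Set.Ioc (0 : ℝ) 1, ∑ x, ν β x :=
        (integral_finsetSum _ fun x _ => hν.integrableOn x).symm
    _ = ∫ _β in Set.Ioc (0 : ℝ) 1, (1 : ℝ) :=
        setIntegral_congr_fun measurableSet_Ioc fun β hβ => (hν.mem_simplex β hβ).2
    _ ≤ 1 := by simp

theorem measurable_nbhd (hW : IsDigraphon W) (hν : IsEnsemble ν) (x : 𝒳) :
    Measurable fun α => nbhd W ν α x :=
  (StronglyMeasurable.integral_prod_right
    (hW.measurable.mul ((hν.measurable x).comp measurable_snd)).stronglyMeasurable).measurable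

theorem mfInt_congr {f g : 𝒳 → ℝ → ℝ} {ν ρ : ℝ → 𝒳 → ℝ}
    (h : ∀ α ∈ Set.Ioc (0 : ℝ) 1, ∑ x, f x α * ν α x = ∑ x, g x α * ρ α x) :
    mfInt f ν = mfInt g ρ :=
  setIntegral_congr_fun measurableSet_Ioc h

theorem nbhd_eq_mfInt [DecidableEq 𝒳] (W : ℝ → ℝ → ℝ) (ν : ℝ → 𝒳 → ℝ) (α : ℝ) (x : 𝒳) :
    nbhd W ν α x = mfInt (fun x' β => W α β * if x' = x then 1 else 0) ν := by
  simp only [nbhd, mfInt, mul_ite, mul_one, mul_zero, ite_mul, zero_mul, Fintype.sum_ite_eq']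

theorem integrableOn_nbhd (hW : IsDigraphon W) (hν : IsEnsemble ν) (x : 𝒳) :
    IntegrableOn (fun α => nbhd W ν α x) (Set.Ioc (0 : ℝ) 1) :=
  integrableOn_Ioc_of_abs_le (measurable_nbhd hW hν x) fun α _ =>
    abs_apply_le_one_of_mem_subProb (nbhd_mem_subProb hW hν α) x

variable {V : ℝ → ℝ → ℝ} {ρ : ℝ → 𝒳 → ℝ}

theorem integrableOn_abs_nbhd_sub (hV : IsDigraphon V) (hρ : IsEnsemble ρ) (hW : IsDigraphon W)
    (hν : IsEnsemble ν) (x : 𝒳) :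
    IntegrableOn (fun α => |nbhd V ρ α x - nbhd W ν α x|) (Set.Ioc (0 : ℝ) 1) :=
  ((integrableOn_nbhd hV hρ x).sub (integrableOn_nbhd hW hν x)).abs

theorem OpDistLE.integral_abs_nbhd_sub_le {w : ℝ} (h : OpDistLE V W w) (hV : IsDigraphon V)
    (hW : IsDigraphon W) (hρ : IsEnsemble ρ) (x : 𝒳) :
    ∫ α in Set.Ioc (0 : ℝ) 1, |nbhd V ρ α x - nbhd W ρ α x| ≤ w := by
  refine le_of_eq_of_le ?_ (h (Set.indicator (Set.Ioc 0 1) fun β => ρ β x)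
    ((hρ.measurable x).indicator measurableSet_Ioc) fun β => ?_)
  · refine integral_congr_ae (ae_of_all _ fun α => congrArg abs ?_)
    rw [nbhd, nbhd, ← integral_sub
      (hρ.integrableOn_mul x (hV.measurable_apply α) (hV.abs_le_one α))
      (hρ.integrableOn_mul x (hW.measurable_apply α) (hW.abs_le_one α))]
    refine setIntegral_congr_fun measurableSet_Ioc fun β hβ => ?_
    rw [Set.indicator_of_mem hβ, sub_mul]
  · by_cases hβ : β ∈ Set.Ioc (0 : ℝ) 1
    · rw [Set.indicator_of_mem hβ]
      exact hρ.abs_le_one x hβ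
    · rw [Set.indicator_of_notMem hβ, abs_zero]
      exact zero_le_one

theorem OpDistLE.integral_abs_nbhd_sub_nbhd_le {w : ℝ} (h : OpDistLE V W w) (hV : IsDigraphon V)
    (hW : IsDigraphon W) (hρ : IsEnsemble ρ) (hν : IsEnsemble ν) (x : 𝒳) :
    ∫ α in Set.Ioc (0 : ℝ) 1, |nbhd V ρ α x - nbhd W ν α x| ≤
      w + ∫ α in Set.Ioc (0 : ℝ) 1, |nbhd W ρ α x - nbhd W ν α x| := by
  have hVW := integrableOn_abs_nbhd_sub hV hρ hW hρ x
  have hρν := integrableOn_abs_nbhd_sub hW hρ hW hν x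
  calc ∫ α in Set.Ioc (0 : ℝ) 1, |nbhd V ρ α x - nbhd W ν α x|
      ≤ ∫ α in Set.Ioc (0 : ℝ) 1,
          (|nbhd V ρ α x - nbhd W ρ α x| + |nbhd W ρ α x - nbhd W ν α x|) :=
        integral_mono (integrableOn_abs_nbhd_sub hV hρ hW hν x) (hVW.add hρν)
          fun α => abs_sub_le _ _ _
    _ ≤ w + ∫ α in Set.Ioc (0 : ℝ) 1, |nbhd W ρ α x - nbhd W ν α x| := by
        rw [integral_add hVW hρν]
        gcongr
        exact h.integral_abs_nbhd_sub_le hV hW hρ x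

end Ensemble

section EmpiricalEnsemble

variable {N : ℕ} [DecidableEq 𝒳]

/-- The empirical step measure ensemble `μ^{N,α} = δ_{X^⌈Nα⌉}`, extended by `0` outside
`(0, 1]`. -/
noncomputable def empEnsemble (X : Fin N → 𝒳) (α : ℝ) (x : 𝒳) : ℝ :=
  stepFun (fun i => if X i = x then 1 else 0) α

theorem empEnsemble_of_mem_cell (X : Fin N → 𝒳) {i : Fin N} {α : ℝ} (hα : α ∈ cell N i) (x : 𝒳) :
    empEnsemble X α x = if X i = x then 1 else 0 :=
  stepFun_of_mem_cell _ hα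

variable [Fintype 𝒳]

theorem sum_mul_empEnsemble_of_mem_cell (X : Fin N → 𝒳) {i : Fin N} {α : ℝ} (hα : α ∈ cell N i)
    (g : 𝒳 → ℝ) : ∑ x, g x * empEnsemble X α x = g (X i) := by
  simp only [empEnsemble_of_mem_cell X hα, mul_ite, mul_one, mul_zero, Fintype.sum_ite_eq]

theorem isEnsemble_empEnsemble (hN : N ≠ 0) (X : Fin N → 𝒳) : IsEnsemble (empEnsemble X) where
  measurable _ := measurable_stepFun _
  mem_simplex α hα := by
    obtain ⟨i, hi⟩ := Set.mem_iUnion.1 (iUnion_cell hN ▸ hα)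
    refine ⟨fun x => ?_, by simpa using sum_mul_empEnsemble_of_mem_cell X hi fun _ => 1⟩
    rw [empEnsemble_of_mem_cell X hi]
    split_ifs <;> simp

theorem empInt_eq_mfInt (hN : N ≠ 0) {f : 𝒳 → ℝ → ℝ} (hf : ∀ x, Measurable (f x)) {M : ℝ}
    (hM : ∀ x α, |f x α| ≤ M) (X : Fin N → 𝒳) : empInt f X = mfInt f (empEnsemble X) := by
  rw [mfInt, ← sum_integral_cell hN ((isEnsemble_empEnsemble hN X).integrableOn_sum_mul hf hM)]
  refine Finset.sum_congr rfl fun i _ => setIntegral_congr_fun (measurableSet_cell i) fun α hα => ?_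
  exact (sum_mul_empEnsemble_of_mem_cell X hα fun x => f x α).symm

theorem empNbhd_eq_nbhd (ξ : Fin N → Fin N → ℝ) (X : Fin N → 𝒳) {i : Fin N} {α : ℝ}
    (hα : α ∈ cell N i) : empNbhd ξ X i = nbhd (stepGraphon ξ) (empEnsemble X) α := by
  have hN : N ≠ 0 := i.pos.ne'
  ext x
  rw [nbhd, empNbhd, ← integral_stepFun]
  refine setIntegral_congr_fun measurableSet_Ioc fun β hβ => ?_
  obtain ⟨j, hj⟩ := Set.mem_iUnion.1 (iUnion_cell hN ▸ hβ)
  rw [stepGraphon_eq_stepFun, stepFun_of_mem_cell _ hα, stepFun_of_mem_cell _ hj,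
    stepFun_of_mem_cell _ hj, empEnsemble_of_mem_cell X hj]

end EmpiricalEnsemble

section Transition

variable [Fintype 𝒳]

/-- A transition kernel `K x G` on `𝒳` that depends on the neighborhood mean field `G` in an
`L`-Lipschitz way: the dynamics that remain of `P` once a policy has been fixed. -/
structure IsLipschitzTransition (K : 𝒳 → (𝒳 → ℝ) → 𝒳 → ℝ) (L : NNReal) : Prop where
  mem_simplex : ∀ x, ∀ ν ∈ subProb 𝒳, K x ν ∈ simplex 𝒳
  l1dist_le : ∀ x, ∀ ν ∈ subProb 𝒳, ∀ ν' ∈ subProb 𝒳, l1dist (K x ν) (K x ν') ≤ L * l1dist ν ν'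

/-- The action of the transition kernel `K` on test functions, where agents with index `α` see the
neighborhood mean field `G α`. -/
noncomputable def pullback (K : 𝒳 → (𝒳 → ℝ) → 𝒳 → ℝ) (G : ℝ → 𝒳 → ℝ) (f : 𝒳 → ℝ → ℝ) (x : 𝒳)
    (α : ℝ) : ℝ :=
  ∑ x', K x (G α) x' * f x' α

/-- One step of the mean field recursion on `W` with transition kernel `K`. -/
noncomputable def transition (K : 𝒳 → (𝒳 → ℝ) → 𝒳 → ℝ) (W : ℝ → ℝ → ℝ) (ν : ℝ → 𝒳 → ℝ) (α : ℝ)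
    (x' : 𝒳) : ℝ :=
  ∑ x, ν α x * K x (nbhd W ν α) x'

variable {K : 𝒳 → (𝒳 → ℝ) → 𝒳 → ℝ} {L : NNReal} {W : ℝ → ℝ → ℝ} {ν : ℝ → 𝒳 → ℝ}
  {G G' : ℝ → 𝒳 → ℝ} {f : 𝒳 → ℝ → ℝ} {M : ℝ}

theorem l1dist_le_card_mul_dist (ν ν' : 𝒳 → ℝ) : l1dist ν ν' ≤ Fintype.card 𝒳 * dist ν ν' := by
  rw [← nsmul_eq_mul, ← Finset.card_univ]
  exact Finset.sum_le_card_nsmul _ _ _ fun x _ => dist_le_pi_dist ν ν' x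

theorem abs_sub_apply_le_l1dist (ν ν' : 𝒳 → ℝ) (x : 𝒳) : |ν x - ν' x| ≤ l1dist ν ν' :=
  Finset.single_le_sum (f := fun y => |ν y - ν' y|) (fun _ _ => abs_nonneg _) (Finset.mem_univ x)

theorem IsLipschitzTransition.continuousOn (hK : IsLipschitzTransition K L) (x x' : 𝒳) :
    ContinuousOn (fun ν => K x ν x') (subProb 𝒳) := by
  refine LipschitzOnWith.continuousOn (K := L * Fintype.card 𝒳) <|
    LipschitzOnWith.of_dist_le_mul fun ν hν ν' hν' => ?_
  calc |K x ν x' - K x ν' x'| ≤ l1dist (K x ν) (K x ν') := abs_sub_apply_le_l1dist _ _ x'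
    _ ≤ L * l1dist ν ν' := hK.l1dist_le x ν hν ν' hν'
    _ ≤ L * (Fintype.card 𝒳 * dist ν ν') := by gcongr; exact l1dist_le_card_mul_dist ν ν'
    _ = (L * Fintype.card 𝒳 : NNReal) * dist ν ν' := by push_cast; ring

theorem IsLipschitzTransition.measurable (hK : IsLipschitzTransition K L)
    (hG : ∀ x, Measurable fun α => G α x) (hG1 : ∀ α, G α ∈ subProb 𝒳) (x x' : 𝒳) :
    Measurable fun α => K x (G α) x' :=
  (hK.continuousOn x x').domRestrict.measurable.comp
    ((measurable_pi_iff.2 hG).subtype_mk (h := hG1))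

theorem measurable_pullback (hK : IsLipschitzTransition K L)
    (hG : ∀ x, Measurable fun α => G α x) (hG1 : ∀ α, G α ∈ subProb 𝒳)
    (hf : ∀ x, Measurable (f x)) (x : 𝒳) : Measurable (pullback K G f x) :=
  Finset.measurable_fun_sum _ fun x' _ => (hK.measurable hG hG1 x x').mul (hf x')

theorem abs_pullback_le (hK : IsLipschitzTransition K L) (hG1 : ∀ α, G α ∈ subProb 𝒳)
    (hM : ∀ x α, |f x α| ≤ M) (x : 𝒳) (α : ℝ) : |pullback K G f x α| ≤ M :=
  abs_sum_mul_le (hK.mem_simplex x _ (hG1 α)) fun x' => hM x' α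

theorem mfInt_transition (K : 𝒳 → (𝒳 → ℝ) → 𝒳 → ℝ) (W : ℝ → ℝ → ℝ) (ν : ℝ → 𝒳 → ℝ)
    (f : 𝒳 → ℝ → ℝ) : mfInt f (transition K W ν) = mfInt (pullback K (nbhd W ν) f) ν :=
  mfInt_congr fun α _ => by
    simp only [transition, pullback, Finset.mul_sum, Finset.sum_mul]
    rw [Finset.sum_comm]
    exact Finset.sum_congr rfl fun x _ => Finset.sum_congr rfl fun x' _ => by ring

theorem abs_sum_mul_pullback_sub_le (hK : IsLipschitzTransition K L) (hM0 : 0 ≤ M)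
    (hM : ∀ x α, |f x α| ≤ M) {p : 𝒳 → ℝ} (hp : p ∈ simplex 𝒳) {α : ℝ} (hG : G α ∈ subProb 𝒳)
    (hG' : G' α ∈ subProb 𝒳) :
    |∑ x, pullback K G f x α * p x - ∑ x, pullback K G' f x α * p x| ≤
      M * L * l1dist (G α) (G' α) := by
  simp only [← Finset.sum_sub_distrib, ← mul_sub, mul_comm _ (p _)]
  refine abs_sum_mul_le hp fun x => ?_
  calc |pullback K G f x α - pullback K G' f x α|
      ≤ M * l1dist (K x (G α)) (K x (G' α)) := abs_sum_mul_sub_sum_mul_le fun x' => hM x' α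
    _ ≤ M * (L * l1dist (G α) (G' α)) := by gcongr; exact hK.l1dist_le x _ hG _ hG'
    _ = M * L * l1dist (G α) (G' α) := (mul_assoc _ _ _).symm

theorem abs_mfInt_pullback_sub_le (hK : IsLipschitzTransition K L)
    (hG : ∀ x, Measurable fun α => G α x) (hG1 : ∀ α, G α ∈ subProb 𝒳)
    (hG' : ∀ x, Measurable fun α => G' α x) (hG1' : ∀ α, G' α ∈ subProb 𝒳)
    (hν : IsEnsemble ν) (hf : ∀ x, Measurable (f x)) (hM0 : 0 ≤ M) (hM : ∀ x α, |f x α| ≤ M) :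
    |mfInt (pullback K G f) ν - mfInt (pullback K G' f) ν| ≤
      M * L * ∑ x, ∫ α in Set.Ioc (0 : ℝ) 1, |G α x - G' α x| := by
  have hdist (x : 𝒳) : IntegrableOn (fun α => |G α x - G' α x|) (Set.Ioc (0 : ℝ) 1) :=
    ((integrableOn_Ioc_of_abs_le (hG x) fun α _ => abs_apply_le_one_of_mem_subProb (hG1 α) x).sub
      (integrableOn_Ioc_of_abs_le (hG' x) fun α _ =>
        abs_apply_le_one_of_mem_subProb (hG1' α) x)).abs
  have hint := hν.integrableOn_sum_mul (measurable_pullback hK hG hG1 hf)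
    (abs_pullback_le hK hG1 hM)
  have hint' := hν.integrableOn_sum_mul (measurable_pullback hK hG' hG1' hf)
    (abs_pullback_le hK hG1' hM)
  calc |mfInt (pullback K G f) ν - mfInt (pullback K G' f) ν|
      = |∫ α in Set.Ioc (0 : ℝ) 1,
          (∑ x, pullback K G f x α * ν α x - ∑ x, pullback K G' f x α * ν α x)| := by
        rw [integral_sub hint hint', mfInt, mfInt]
    _ ≤ ∫ α in Set.Ioc (0 : ℝ) 1, M * L * l1dist (G α) (G' α) :=
        abs_integral_le_integral_abs.trans <| setIntegral_mono_on (hint.sub hint').abs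
          ((integrable_finsetSum _ fun x _ => hdist x).const_mul _) measurableSet_Ioc fun α hα =>
            abs_sum_mul_pullback_sub_le hK hM0 hM (hν.mem_simplex α hα) (hG1 α) (hG1' α)
    _ = M * L * ∑ x, ∫ α in Set.Ioc (0 : ℝ) 1, |G α x - G' α x| := by
        simp only [l1dist]
        rw [integral_const_mul, integral_finsetSum _ fun x _ => hdist x]

theorem isEnsemble_transition (hK : IsLipschitzTransition K L) (hW : IsDigraphon W)
    (hν : IsEnsemble ν) : IsEnsemble (transition K W ν) where
  measurable x' := Finset.measurable_fun_sum _ fun x _ =>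
    (hν.measurable x).mul (hK.measurable (measurable_nbhd hW hν) (nbhd_mem_subProb hW hν) x x')
  mem_simplex α hα :=
    sum_mul_sum_mul_mem_simplex (hν.mem_simplex α hα) fun x =>
      hK.mem_simplex x _ (nbhd_mem_subProb hW hν α)

end Transition

section ErrorBound

variable [Fintype 𝒳] {N : ℕ} {f : 𝒳 → ℝ → ℝ} {M : ℝ}

theorem sum_prod_mul_abs_empInt_sub_mean_le {q : Fin N → 𝒳 → ℝ} (hq : ∀ i, q i ∈ simplex 𝒳)
    (hM0 : 0 ≤ M) (hM : ∀ x α, |f x α| ≤ M) :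
    ∑ Y : Fin N → 𝒳, (∏ i, q i (Y i)) *
      |empInt f Y - ∑ i, ∑ x, q i x * ∫ α in cell N i, f x α| ≤ M * (√N)⁻¹ := by
  have h := sum_prod_mul_abs_sum_sub_mean_le hq (div_nonneg hM0 N.cast_nonneg)
    fun i x => abs_integral_cell_le i (hM x)
  rwa [Fintype.card_fin, div_mul_eq_mul_div, mul_div_assoc, Real.sqrt_div_self', one_div] at h

/-- When the joint law of the agents' states is `p`, the empirical ensemble approximates `ν` in mean
up to `δ`, uniformly over test functions bounded by `1`. -/
def IsErrorBound (p : (Fin N → 𝒳) → ℝ) (ν : ℝ → 𝒳 → ℝ) (δ : ℝ) : Prop :=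
  ∀ (f : 𝒳 → ℝ → ℝ) (M : ℝ), (∀ x, Measurable (f x)) → 0 ≤ M → (∀ x α, |f x α| ≤ M) →
    ∑ X, p X * |empInt f X - mfInt f ν| ≤ M * δ

theorem IsErrorBound.congr {p : (Fin N → 𝒳) → ℝ} {ν ρ : ℝ → 𝒳 → ℝ} {δ : ℝ}
    (h : IsErrorBound p ν δ) (hνρ : ∀ α ∈ Set.Ioc (0 : ℝ) 1, ν α = ρ α) : IsErrorBound p ρ δ := by
  intro f M hf hM0 hM
  have hmf : mfInt f ν = mfInt f ρ := mfInt_congr fun α hα => by rw [hνρ α hα]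
  rw [← hmf]
  exact h f M hf hM0 hM

theorem IsErrorBound.mono {p : (Fin N → 𝒳) → ℝ} {ν : ℝ → 𝒳 → ℝ} {δ δ' : ℝ}
    (h : IsErrorBound p ν δ) (hδ : δ ≤ δ') : IsErrorBound p ν δ' := fun f M hf hM0 hM =>
  (h f M hf hM0 hM).trans (mul_le_mul_of_nonneg_left hδ hM0)

theorem isErrorBound_prod (hN : N ≠ 0) {μ0 : 𝒳 → ℝ} (hμ0 : μ0 ∈ simplex 𝒳) :
    IsErrorBound (fun X : Fin N → 𝒳 => ∏ i, μ0 (X i)) (fun _ => μ0) (√N)⁻¹ := by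
  intro f M hf hM0 hM
  have hint (x : 𝒳) : IntegrableOn (f x) (Set.Ioc (0 : ℝ) 1) :=
    integrableOn_Ioc_of_abs_le (hf x) fun α _ => hM x α
  have hmean : ∑ i : Fin N, ∑ x, μ0 x * ∫ α in cell N i, f x α = mfInt f fun _ => μ0 := by
    rw [Finset.sum_comm, mfInt, integral_finsetSum _ fun x _ => (hint x).mul_const _]
    simp only [← Finset.mul_sum, sum_integral_cell hN (hint _), integral_mul_const]
    exact Finset.sum_congr rfl fun x _ => mul_comm _ _
  simpa only [hmean] using sum_prod_mul_abs_empInt_sub_mean_le (fun _ : Fin N => hμ0) hM0 hM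

variable [DecidableEq 𝒳] {ξ : Fin N → Fin N → ℝ} {p : (Fin N → 𝒳) → ℝ} {ν : ℝ → 𝒳 → ℝ}
  {δ w : ℝ} {W : ℝ → ℝ → ℝ} {K : 𝒳 → (𝒳 → ℝ) → 𝒳 → ℝ} {L : NNReal}

theorem IsErrorBound.sum_mul_integral_abs_nbhd_sub_le (h : IsErrorBound p ν δ) (hN : N ≠ 0)
    (hW : IsDigraphon W) (hν : IsEnsemble ν) (x : 𝒳) :
    ∑ X, p X * ∫ α in Set.Ioc (0 : ℝ) 1, |nbhd W (empEnsemble X) α x - nbhd W ν α x| ≤ δ := by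
  have hint (X : Fin N → 𝒳) := (integrableOn_abs_nbhd_sub hW (isEnsemble_empEnsemble hN X) hW hν
    x).const_mul (p X)
  have hpoint (α : ℝ) : ∑ X, p X * |nbhd W (empEnsemble X) α x - nbhd W ν α x| ≤ δ := by
    have hf (x' : 𝒳) : Measurable fun β => W α β * if x' = x then (1 : ℝ) else 0 :=
      (hW.measurable_apply α).mul_const _
    have hf1 (x' : 𝒳) (β : ℝ) : |W α β * if x' = x then (1 : ℝ) else 0| ≤ 1 := by
      split_ifs <;> simp [hW.abs_le_one]
    simpa only [nbhd_eq_mfInt, ← empInt_eq_mfInt hN hf hf1, one_mul] using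
      h _ 1 hf zero_le_one hf1
  calc ∑ X, p X * ∫ α in Set.Ioc (0 : ℝ) 1, |nbhd W (empEnsemble X) α x - nbhd W ν α x|
      = ∫ α in Set.Ioc (0 : ℝ) 1, ∑ X, p X * |nbhd W (empEnsemble X) α x - nbhd W ν α x| := by
        simp only [← integral_const_mul]
        exact (integral_finsetSum _ fun X _ => hint X).symm
    _ ≤ ∫ _α in Set.Ioc (0 : ℝ) 1, δ :=
        integral_mono (integrable_finsetSum _ fun X _ => hint X) (integrable_const _) hpoint
    _ = δ := by simp

/-- The law of the agents' states after one step of the `N`-agent dynamics with transition kernel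
`K`, started from the joint law `p`. -/
noncomputable def nextLaw (K : 𝒳 → (𝒳 → ℝ) → 𝒳 → ℝ) (ξ : Fin N → Fin N → ℝ)
    (p : (Fin N → 𝒳) → ℝ) (Y : Fin N → 𝒳) : ℝ :=
  ∑ X, p X * ∏ i, K (X i) (empNbhd ξ X i) (Y i)

theorem sum_nextLaw_mul (K : 𝒳 → (𝒳 → ℝ) → 𝒳 → ℝ) (ξ : Fin N → Fin N → ℝ)
    (p g : (Fin N → 𝒳) → ℝ) :
    ∑ Y, nextLaw K ξ p Y * g Y =
      ∑ X, p X * ∑ Y : Fin N → 𝒳, (∏ i, K (X i) (empNbhd ξ X i) (Y i)) * g Y := by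
  simp only [nextLaw, Finset.sum_mul, Finset.mul_sum, mul_assoc]
  exact Finset.sum_comm

theorem empNbhd_mem_subProb (hξ : ∀ i j, ξ i j ∈ Set.Icc (0 : ℝ) 1) (X : Fin N → 𝒳) (i : Fin N) :
    empNbhd ξ X i ∈ subProb 𝒳 := by
  have hi : ((i : ℝ) + 1) / N ∈ cell N i := Set.right_mem_Ioc.2 (by
    have := i.pos
    gcongr
    exact lt_add_one _)
  rw [empNbhd_eq_nbhd ξ X hi]
  exact nbhd_mem_subProb (isDigraphon_stepGraphon hξ) (isEnsemble_empEnsemble i.pos.ne' X) _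

theorem nextLaw_mem_simplex (hK : IsLipschitzTransition K L)
    (hξ : ∀ i j, ξ i j ∈ Set.Icc (0 : ℝ) 1) (hp : p ∈ simplex (Fin N → 𝒳)) :
    nextLaw K ξ p ∈ simplex (Fin N → 𝒳) :=
  sum_mul_sum_mul_mem_simplex hp fun X => prod_mem_simplex fun i =>
    hK.mem_simplex _ _ (empNbhd_mem_subProb hξ X i)

theorem sum_sum_mul_integral_cell (K : 𝒳 → (𝒳 → ℝ) → 𝒳 → ℝ) (ξ : Fin N → Fin N → ℝ)
    (hf : ∀ x, Measurable (f x)) (hM : ∀ x α, |f x α| ≤ M) (X : Fin N → 𝒳) :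
    ∑ i, ∑ x, K (X i) (empNbhd ξ X i) x * ∫ α in cell N i, f x α =
      empInt (pullback K (nbhd (stepGraphon ξ) (empEnsemble X)) f) X := by
  refine Finset.sum_congr rfl fun i _ => ?_
  have hint (x : 𝒳) : IntegrableOn (f x) (cell N i) :=
    (integrableOn_Ioc_of_abs_le (hf x) fun α _ => hM x α).mono_set (cell_subset i)
  calc ∑ x, K (X i) (empNbhd ξ X i) x * ∫ α in cell N i, f x α
      = ∫ α in cell N i, ∑ x, K (X i) (empNbhd ξ X i) x * f x α := by
        simp only [← integral_const_mul]
        exact (integral_finsetSum _ fun x _ => (hint x).const_mul _).symm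
    _ = ∫ α in cell N i, pullback K (nbhd (stepGraphon ξ) (empEnsemble X)) f (X i) α :=
        setIntegral_congr_fun (measurableSet_cell i) fun α hα => by
          rw [pullback, empNbhd_eq_nbhd ξ X hα]

theorem sum_prod_mul_abs_empInt_sub_le (hK : IsLipschitzTransition K L)
    (hξ : ∀ i j, ξ i j ∈ Set.Icc (0 : ℝ) 1) (hf : ∀ x, Measurable (f x)) (hM0 : 0 ≤ M)
    (hM : ∀ x α, |f x α| ≤ M) (X : Fin N → 𝒳) (m : ℝ) :
    ∑ Y : Fin N → 𝒳, (∏ i, K (X i) (empNbhd ξ X i) (Y i)) * |empInt f Y - m| ≤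
      M * (√N)⁻¹ + |empInt (pullback K (nbhd (stepGraphon ξ) (empEnsemble X)) f) X - m| := by
  have hq (i : Fin N) : K (X i) (empNbhd ξ X i) ∈ simplex 𝒳 :=
    hK.mem_simplex _ _ (empNbhd_mem_subProb hξ X i)
  have hprod := prod_mem_simplex hq
  set r := empInt (pullback K (nbhd (stepGraphon ξ) (empEnsemble X)) f) X with hr
  have hnoise := sum_prod_mul_abs_empInt_sub_mean_le hq hM0 hM
  rw [sum_sum_mul_integral_cell K ξ hf hM X, ← hr] at hnoise
  calc ∑ Y : Fin N → 𝒳, (∏ i, K (X i) (empNbhd ξ X i) (Y i)) * |empInt f Y - m|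
      ≤ ∑ Y : Fin N → 𝒳, (∏ i, K (X i) (empNbhd ξ X i) (Y i)) * (|empInt f Y - r| + |r - m|) :=
        Finset.sum_le_sum fun Y _ => mul_le_mul_of_nonneg_left (abs_sub_le _ _ _) (hprod.1 Y)
    _ ≤ M * (√N)⁻¹ + |r - m| := by
        simp only [mul_add, Finset.sum_add_distrib, ← Finset.sum_mul, hprod.2, one_mul]
        gcongr

theorem abs_empInt_pullback_sub_mfInt_transition_le (hK : IsLipschitzTransition K L) (hN : N ≠ 0)
    (hξ : ∀ i j, ξ i j ∈ Set.Icc (0 : ℝ) 1) (hW : IsDigraphon W)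
    (hw : OpDistLE (stepGraphon ξ) W w) (hν : IsEnsemble ν) (hf : ∀ x, Measurable (f x))
    (hM0 : 0 ≤ M) (hM : ∀ x α, |f x α| ≤ M) (X : Fin N → 𝒳) :
    |empInt (pullback K (nbhd (stepGraphon ξ) (empEnsemble X)) f) X -
        mfInt f (transition K W ν)| ≤
      |empInt (pullback K (nbhd W ν) f) X - mfInt (pullback K (nbhd W ν) f) ν| +
        M * L * ∑ x, (w + ∫ α in Set.Ioc (0 : ℝ) 1,
          |nbhd W (empEnsemble X) α x - nbhd W ν α x|) := by
  have hX := isEnsemble_empEnsemble hN X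
  have hV := isDigraphon_stepGraphon hξ
  have hGm := measurable_nbhd hV hX
  have hG := nbhd_mem_subProb hV hX
  have hGm' := measurable_nbhd hW hν
  have hG' := nbhd_mem_subProb hW hν
  have hswap := (abs_mfInt_pullback_sub_le hK hGm hG hGm' hG' hX hf hM0 hM).trans <|
    mul_le_mul_of_nonneg_left (Finset.sum_le_sum fun x _ =>
      hw.integral_abs_nbhd_sub_nbhd_le hV hW hX hν x) (by positivity)
  rw [← empInt_eq_mfInt hN (measurable_pullback hK hGm hG hf) (abs_pullback_le hK hG hM),
    ← empInt_eq_mfInt hN (measurable_pullback hK hGm' hG' hf) (abs_pullback_le hK hG' hM)] at hswap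
  rw [mfInt_transition, add_comm]
  exact (abs_sub_le _ _ _).trans (add_le_add_left hswap _)

theorem IsErrorBound.nextLaw_transition (h : IsErrorBound p ν δ) (hp : p ∈ simplex (Fin N → 𝒳))
    (hK : IsLipschitzTransition K L) (hN : N ≠ 0) (hξ : ∀ i j, ξ i j ∈ Set.Icc (0 : ℝ) 1)
    (hW : IsDigraphon W) (hw : OpDistLE (stepGraphon ξ) W w) (hν : IsEnsemble ν) :
    IsErrorBound (nextLaw K ξ p) (transition K W ν)
      ((√N)⁻¹ + δ + L * Fintype.card 𝒳 * (w + δ)) := by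
  intro f M hf hM0 hM
  have hG := nbhd_mem_subProb hW hν
  set e : (Fin N → 𝒳) → ℝ := fun X =>
    |empInt (pullback K (nbhd W ν) f) X - mfInt (pullback K (nbhd W ν) f) ν|
  set d : (Fin N → 𝒳) → 𝒳 → ℝ := fun X x =>
    ∫ α in Set.Ioc (0 : ℝ) 1, |nbhd W (empEnsemble X) α x - nbhd W ν α x|
  have he : ∑ X, p X * e X ≤ M * δ :=
    h _ M (measurable_pullback hK (measurable_nbhd hW hν) hG hf) hM0 (abs_pullback_le hK hG hM)
  have hd (x : 𝒳) : ∑ X, p X * d X x ≤ δ := h.sum_mul_integral_abs_nbhd_sub_le hN hW hν x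
  have hmix (g : (Fin N → 𝒳) → ℝ) (c : ℝ) : ∑ X, p X * (c + g X) = c + ∑ X, p X * g X := by
    simp only [mul_add, Finset.sum_add_distrib, ← Finset.sum_mul, hp.2, one_mul]
  have hcomm : ∑ X, p X * ∑ x, (w + d X x) = ∑ x, (w + ∑ X, p X * d X x) := by
    simp only [Finset.mul_sum]
    rw [Finset.sum_comm]
    simp only [hmix]
  calc ∑ Y, nextLaw K ξ p Y * |empInt f Y - mfInt f (transition K W ν)|
      ≤ ∑ X, p X * (M * (√N)⁻¹ + (e X + M * L * ∑ x, (w + d X x))) := by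
        rw [sum_nextLaw_mul]
        refine Finset.sum_le_sum fun X _ => mul_le_mul_of_nonneg_left ?_ (hp.1 X)
        refine (sum_prod_mul_abs_empInt_sub_le hK hξ hf hM0 hM X _).trans ?_
        gcongr
        exact abs_empInt_pullback_sub_mfInt_transition_le hK hN hξ hW hw hν hf hM0 hM X
    _ = M * (√N)⁻¹ + (∑ X, p X * e X + M * L * ∑ x, (w + ∑ X, p X * d X x)) := by
        simp only [hmix, hcomm, mul_add (p _) (e _), mul_left_comm (p _) (M * L),
          Finset.sum_add_distrib (f := fun X => p X * e X), ← Finset.mul_sum]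
    _ ≤ M * (√N)⁻¹ + (M * δ + M * L * ∑ _x : 𝒳, (w + δ)) := by
        gcongr
        exact hd _
    _ = M * ((√N)⁻¹ + δ + L * Fintype.card 𝒳 * (w + δ)) := by
        rw [Finset.sum_const, Finset.card_univ, nsmul_eq_mul]
        ring

end ErrorBound

section UncontrolledDynamics

variable [Fintype 𝒳] [Fintype 𝒰] {P : 𝒳 → 𝒰 → (𝒳 → ℝ) → 𝒳 → ℝ} {LP : ℝ}

/-- The transition kernel on `𝒳` obtained by averaging `P` over the actions drawn from the decision
rule `π`. -/
noncomputable def closedLoop (π : 𝒳 → 𝒰 → ℝ) (P : 𝒳 → 𝒰 → (𝒳 → ℝ) → 𝒳 → ℝ) (x : 𝒳) (G : 𝒳 → ℝ)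
    (x' : 𝒳) : ℝ :=
  ∑ u, π x u * P x u G x'

theorem isLipschitzTransition_closedLoop {π : 𝒳 → 𝒰 → ℝ} (hπ : ∀ x, π x ∈ simplex 𝒰)
    (hP : IsKernel P) (hPLip : KernelLipschitz P LP) :
    IsLipschitzTransition (closedLoop π P) LP.toNNReal where
  mem_simplex x ν hν := sum_mul_sum_mul_mem_simplex (hπ x) fun u => hP x u ν hν
  l1dist_le x ν hν ν' hν' := by
    have hnonneg (p q : 𝒳 → ℝ) : 0 ≤ l1dist p q := Finset.sum_nonneg fun _ _ => abs_nonneg _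
    have hu (u : 𝒰) : |l1dist (P x u ν) (P x u ν')| ≤ LP.toNNReal * l1dist ν ν' := by
      rw [abs_of_nonneg (hnonneg _ _)]
      exact (hPLip x u ν ν' hν hν').trans
        (mul_le_mul_of_nonneg_right LP.le_coe_toNNReal (hnonneg _ _))
    calc l1dist (closedLoop π P x ν) (closedLoop π P x ν')
        ≤ ∑ x', ∑ u, π x u * |P x u ν x' - P x u ν' x'| := Finset.sum_le_sum fun x' _ => by
          simp only [closedLoop, ← Finset.sum_sub_distrib, ← mul_sub]
          refine (Finset.abs_sum_le_sum_abs _ _).trans_eq (Finset.sum_congr rfl fun u _ => ?_)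
          rw [abs_mul, abs_of_nonneg ((hπ x).1 u)]
      _ = ∑ u, π x u * l1dist (P x u ν) (P x u ν') := by
          simp only [l1dist, Finset.mul_sum]
          exact Finset.sum_comm
      _ ≤ LP.toNNReal * l1dist ν ν' := (le_abs_self _).trans (abs_sum_mul_le (hπ x) hu)

variable {W : ℝ → ℝ → ℝ} {μ0 : 𝒳 → ℝ} {π : ℕ → 𝒳 → 𝒰 → ℝ} {μ : ℕ → ℝ → 𝒳 → ℝ}

theorem IsMeanFieldOf.eq_transition (hμ : IsMeanFieldOf W P μ0 (fun _ => π) μ) (t : ℕ) {α : ℝ}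
    (hα : α ∈ Set.Ioc (0 : ℝ) 1) : μ (t + 1) α = transition (closedLoop (π t) P) W (μ t) α :=
  funext (hμ.2.2 t α (Set.Ioc_subset_Icc_self hα))

theorem IsMeanFieldOf.isEnsemble (hμ : IsMeanFieldOf W P μ0 (fun _ => π) μ)
    (hμ0 : μ0 ∈ simplex 𝒳) (hP : IsKernel P) (hPLip : KernelLipschitz P LP) (hW : IsDigraphon W)
    (hπ : IsPolicy π) (t : ℕ) : IsEnsemble (μ t) := by
  refine ⟨hμ.1 t, ?_⟩
  induction t with
  | zero => exact fun α hα => hμ.2.1 α (Set.Ioc_subset_Icc_self hα) ▸ hμ0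
  | succ t ih =>
    intro α hα
    rw [hμ.eq_transition t hα]
    exact (isEnsemble_transition (isLipschitzTransition_closedLoop (hπ t) hP hPLip) hW
      ⟨hμ.1 t, ih⟩).mem_simplex α hα

variable [DecidableEq 𝒳]

theorem jointLaw_mem_simplex {N : ℕ} {ξ : Fin N → Fin N → ℝ}
    (hξ : ∀ i j, ξ i j ∈ Set.Icc (0 : ℝ) 1) (hμ0 : μ0 ∈ simplex 𝒳) (hP : IsKernel P)
    (hPLip : KernelLipschitz P LP) (hπ : IsPolicy π) (t : ℕ) :
    jointLaw P μ0 ξ (fun _ => π) t ∈ simplex (Fin N → 𝒳) := by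
  induction t with
  | zero => exact prod_mem_simplex fun _ => hμ0
  | succ t ih =>
    exact nextLaw_mem_simplex (isLipschitzTransition_closedLoop (hπ t) hP hPLip) hξ ih

/-- The factor `2 (1 + L |𝒳|)` by which the error bound grows in each time step. -/
noncomputable def growthFactor (𝒳 : Type*) [Fintype 𝒳] (L : NNReal) : ℝ :=
  2 * (1 + L * Fintype.card 𝒳)

theorem one_le_growthFactor (𝒳 : Type*) [Fintype 𝒳] (L : NNReal) : 1 ≤ growthFactor 𝒳 L := by
  have : (0 : ℝ) ≤ L * Fintype.card 𝒳 := by positivity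
  unfold growthFactor
  linarith

theorem isErrorBound_jointLaw {N : ℕ} (hN : N ≠ 0) {ξ : Fin N → Fin N → ℝ}
    (hξ : ∀ i j, ξ i j ∈ Set.Icc (0 : ℝ) 1) (hμ0 : μ0 ∈ simplex 𝒳) (hP : IsKernel P)
    (hPLip : KernelLipschitz P LP) (hW : IsDigraphon W) (hπ : IsPolicy π)
    (hμ : IsMeanFieldOf W P μ0 (fun _ => π) μ) {w : ℝ} (hw : OpDistLE (stepGraphon ξ) W w)
    (t : ℕ) :
    IsErrorBound (jointLaw P μ0 ξ (fun _ => π) t) (μ t)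
      (growthFactor 𝒳 LP.toNNReal ^ t * ((√N)⁻¹ + w)) := by
  have hw0 := hw.nonneg
  induction t with
  | zero =>
    refine ((isErrorBound_prod hN hμ0).congr fun α hα =>
      (hμ.2.1 α (Set.Ioc_subset_Icc_self hα)).symm).mono ?_
    simpa using hw0
  | succ t ih =>
    refine ((ih.nextLaw_transition (jointLaw_mem_simplex hξ hμ0 hP hPLip hπ t)
      (isLipschitzTransition_closedLoop (hπ t) hP hPLip) hN hξ hW hw
      (hμ.isEnsemble hμ0 hP hPLip hW hπ t)).congr fun α hα => (hμ.eq_transition t hα).symm).mono ?_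
    set b := growthFactor 𝒳 LP.toNNReal with hb
    set c := (LP.toNNReal : ℝ) * Fintype.card 𝒳
    have hc : 0 ≤ c := by positivity
    have hs : 0 ≤ (√N)⁻¹ := by positivity
    calc (√N)⁻¹ + b ^ t * ((√N)⁻¹ + w) + c * (w + b ^ t * ((√N)⁻¹ + w))
        ≤ (1 + c) * (1 * ((√N)⁻¹ + w)) + (1 + c) * (b ^ t * ((√N)⁻¹ + w)) := by
          nlinarith [mul_nonneg hc hs]
      _ ≤ (1 + c) * (b ^ t * ((√N)⁻¹ + w)) + (1 + c) * (b ^ t * ((√N)⁻¹ + w)) := by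
          gcongr
          exact one_le_pow₀ (one_le_growthFactor 𝒳 _)
      _ = b ^ (t + 1) * ((√N)⁻¹ + w) := by
          rw [pow_succ]
          simp only [hb, growthFactor]
          ring

end UncontrolledDynamics

theorem exists_forall_mul_inv_sqrt_add_le {c ε : ℝ} (hc : 0 ≤ c) (hε : 0 < ε) :
    ∃ w > 0, ∃ N₀ : ℕ, ∀ N ≥ N₀, c * ((√(N : ℝ))⁻¹ + w) ≤ ε := by
  have hw : 0 < ε / (2 * (c + 1)) := by positivity
  have htendsto : Tendsto (fun N : ℕ => (√(N : ℝ))⁻¹) atTop (nhds 0) :=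
    tendsto_inv_atTop_zero.comp (Real.tendsto_sqrt_atTop.comp tendsto_natCast_atTop_atTop)
  obtain ⟨N₀, hN₀⟩ := eventually_atTop.1 (htendsto.eventually (ge_mem_nhds hw))
  refine ⟨_, hw, N₀, fun N hN => ?_⟩
  calc c * ((√(N : ℝ))⁻¹ + ε / (2 * (c + 1)))
      ≤ (c + 1) * (ε / (2 * (c + 1)) + ε / (2 * (c + 1))) := by
        gcongr
        · exact le_add_of_nonneg_right zero_le_one
        · exact hN₀ N hN
    _ = ε := by field_simp; ring

theorem uncontrolled_empirical_convergence_general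
    {𝒳 𝒰 : Type*} [Fintype 𝒳] [DecidableEq 𝒳] [Fintype 𝒰]
    {μ0 : 𝒳 → ℝ} (hμ0 : μ0 ∈ simplex 𝒳)
    {P : 𝒳 → 𝒰 → (𝒳 → ℝ) → 𝒳 → ℝ} (hP : IsKernel P)
    {LP : ℝ} (hPLip : KernelLipschitz P LP)
    {W : ℝ → ℝ → ℝ} (hW : IsDigraphon W)
    {ξ : (N : ℕ) → Fin N → Fin N → ℝ} (hξ : ∀ N i j, ξ N i j ∈ Set.Icc (0 : ℝ) 1)
    {π : ℕ → 𝒳 → 𝒰 → ℝ} (hπ : IsPolicy π)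
    {μ : ℕ → ℝ → 𝒳 → ℝ} (hμ : IsMeanFieldOf W P μ0 (fun _ => π) μ)
    (t : ℕ) {Mf : ℝ} {f : 𝒳 → ℝ → ℝ} (hf : ∀ x, Measurable (f x)) (hMf : ∀ x α, |f x α| ≤ Mf) :
    (OpConvergesTo (fun N => stepGraphon (ξ N)) W →
      ∀ ε > (0 : ℝ), ∃ N₀ : ℕ, ∀ N > N₀,
        ∑ X : Fin N → 𝒳, jointLaw P μ0 (ξ N) (fun _ => π) t X * |empInt f X - mfInt f (μ t)| ≤ ε) ∧
    (OpRateSqrt (fun N => stepGraphon (ξ N)) W →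
      ∃ C : ℝ, ∀ N : ℕ, 1 ≤ N →
        ∑ X : Fin N → 𝒳, jointLaw P μ0 (ξ N) (fun _ => π) t X * |empInt f X - mfInt f (μ t)| ≤
          C / √N) := by
  have hMf0 : 0 ≤ Mf :=
    have ⟨x⟩ := nonempty_of_mem_simplex hμ0
    (abs_nonneg _).trans (hMf x 0)
  set b := growthFactor 𝒳 LP.toNNReal ^ t
  have hb : 0 ≤ b := pow_nonneg (zero_le_one.trans (one_le_growthFactor 𝒳 _)) t
  have hbound {N : ℕ} (hN : 1 ≤ N) {w : ℝ} (hw : OpDistLE (stepGraphon (ξ N)) W w) :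
      ∑ X : Fin N → 𝒳, jointLaw P μ0 (ξ N) (fun _ => π) t X * |empInt f X - mfInt f (μ t)| ≤
        Mf * (b * ((√N)⁻¹ + w)) :=
    isErrorBound_jointLaw (Nat.one_le_iff_ne_zero.1 hN) (hξ N) hμ0 hP hPLip hW hπ hμ hw t f Mf hf
      hMf0 hMf
  constructor
  · intro hconv ε hε
    obtain ⟨w, hw, N₁, hN₁⟩ := exists_forall_mul_inv_sqrt_add_le (mul_nonneg hMf0 hb) hε
    obtain ⟨N₂, hN₂⟩ := hconv w hw
    refine ⟨max N₁ N₂, fun N hN => (hbound (Nat.one_le_of_lt hN) (hN₂ N ?_)).trans ?_⟩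
    · exact (le_max_right _ _).trans hN.le
    · rw [← mul_assoc]
      exact hN₁ N ((le_max_left _ _).trans hN.le)
  · rintro ⟨C, hC⟩
    refine ⟨Mf * (b * (1 + C)), fun N hN => (hbound hN (hC N hN)).trans_eq ?_⟩
    ring

/-- the uncontrolled case. If |𝒰| = 1 there is a unique policy (ensemble)
𝛑 (the constant one), with generated mean field ensemble 𝛍 = Ψ(𝛑). Under Assumption (W)
(with P Lipschitz), for every measurable f : 𝒳×[0,1] → ℝ with |f| ≤ M_f and every t ∈ 𝒯:
E[|𝛍^N_t(f) − 𝛍_t(f)|] → 0 as N → ∞; moreover, if ‖W_N − W‖_{L∞→L1} = O(1/√N), then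
this convergence is at rate O(1/√N). -/
theorem uncontrolled_empirical_convergence
    {𝒳 𝒰 : Type*} [Fintype 𝒳] [DecidableEq 𝒳] [Nonempty 𝒳] [Fintype 𝒰] [Nonempty 𝒰]
    (hcard : Fintype.card 𝒰 = 1)
    (T : ℕ) (μ0 : 𝒳 → ℝ) (hμ0 : μ0 ∈ simplex 𝒳)
    (P : 𝒳 → 𝒰 → (𝒳 → ℝ) → 𝒳 → ℝ) (hP : IsKernel P)
    (LP : ℝ) (hPLip : KernelLipschitz P LP)
    (W : ℝ → ℝ → ℝ) (hW : IsGraphon W)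
    (ξ : (N : ℕ) → Fin N → Fin N → ℝ) (hξ : ∀ N, IsEdgeWeights (ξ N))
    (hWconv : OpConvergesTo (fun N => stepGraphon (ξ N)) W)
    (μ : ℕ → ℝ → 𝒳 → ℝ)
    (hμ : IsMeanFieldOf W P μ0 (fun _ _ _ _ => (1:ℝ)) μ) :
    (∀ t < T, ∀ (Mf : ℝ) (f : 𝒳 → ℝ → ℝ), (∀ x, Measurable (f x)) → (∀ x α, |f x α| ≤ Mf) →
      ∀ ε > (0:ℝ), ∃ N₀ : ℕ, ∀ N > N₀,
        (∑ X : Fin N → 𝒳,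
            jointLaw P μ0 (ξ N) (fun _ _ _ _ => (1:ℝ)) t X *
              |empInt f X - mfInt f (μ t)|) ≤ ε) ∧
    (OpRateSqrt (fun N => stepGraphon (ξ N)) W →
      ∀ t < T, ∀ (Mf : ℝ) (f : 𝒳 → ℝ → ℝ), (∀ x, Measurable (f x)) → (∀ x α, |f x α| ≤ Mf) →
        ∃ C : ℝ, ∀ N : ℕ, 1 ≤ N →
          (∑ X : Fin N → 𝒳,
              jointLaw P μ0 (ξ N) (fun _ _ _ _ => (1:ℝ)) t X *
                |empInt f X - mfInt f (μ t)|) ≤ C / Real.sqrt N) := by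
  have hπ : IsPolicy fun (_ : ℕ) (_ : 𝒳) (_ : 𝒰) => (1 : ℝ) := fun _ _ => by simp [hcard]
  have h := fun t Mf f => uncontrolled_empirical_convergence_general (Mf := Mf) (f := f)
    hμ0 hP hPLip hW.isDigraphon (fun N => (hξ N).mem_Icc) hπ hμ t
  exact ⟨fun t _ Mf f hf hM => (h t Mf f hf hM).1 hWconv,
    fun hrate t _ Mf f hf hM => (h t Mf f hf hM).2 hrate⟩

end GMFG
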